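/- Let T ∈ (0,∞], 1 < r₁, r₂ < ∞, 1 ≤ q₁ ≤ q₂ ≤ ∞ with (N/2)(1/q₁ - 1/q₂) < 1 and 1/r₁ + (N/2)(1/q₁ - 1/q₂) = 1 + 1/r₂. Then the operator C defined by (Cf)(t) = ∫₀ᵗ e^{(t-s)Δ} f(s) ds is bounded from L^{r₁}(0,T; L^{q₁}(ℝ^N)) to L^{r₂}(0,T; L^{q₂}(ℝ^N)). -/

import Mathlib

open MeasureTheory Real
open scoped ENNReal

noncomputable section

/-- The heat kernel on `ℝ^N`. -/
def heatKernel (N : ℕ) (t : ℝ) (x : EuclideanSpace ℝ (Fin N)) : ℝ :=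
  (4 * π * t) ^ (-(N : ℝ) / 2) * Real.exp (-‖x‖ ^ 2 / (4 * t))

/-- Mixed space-time norm `‖f‖_{L^r(0,T;L^q)}` (with `T ∈ (0,∞]`, time exponent `r` finite). -/
def mixedNorm {N : ℕ} {F : Type*} [NormedAddCommGroup F] (r : ℝ) (q : ℝ≥0∞) (T : ℝ≥0∞)
    (f : ℝ → EuclideanSpace ℝ (Fin N) → F) : ℝ≥0∞ :=
  (∫⁻ t in {t : ℝ | 0 < t ∧ ENNReal.ofReal t < T}, (eLpNorm (f t) q volume) ^ r) ^ (1 / r)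

/-- The operator `C f (t) = ∫₀ᵗ e^{(t-s)Δ} f(s) ds`, realized as convolution with the heat
kernel. -/
def heatOpC {N : ℕ} (f : ℝ → EuclideanSpace ℝ (Fin N) → ℝ) (t : ℝ)
    (x : EuclideanSpace ℝ (Fin N)) : ℝ :=
  ∫ s in Set.Ioo 0 t, ∫ y, heatKernel N (t - s) (x - y) * f s y

theorem lintegral_Ioc_rpow {β R : ℝ} (hβ : -1 < β) (hR : 0 ≤ R) :
    ∫⁻ τ in Set.Ioc 0 R, ENNReal.ofReal (τ ^ β) = ENNReal.ofReal (R ^ (β + 1) / (β + 1)) := by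
  have hint : IntegrableOn (fun x : ℝ => x ^ β) (Set.Ioc 0 R) :=
    (intervalIntegrable_iff_integrableOn_Ioc_of_le hR).1
      (intervalIntegral.intervalIntegrable_rpow' hβ)
  rw [← ofReal_integral_eq_lintegral_ofReal hint, ← intervalIntegral.integral_of_le hR,
    integral_rpow (Or.inl hβ), Real.zero_rpow (by linarith), sub_zero]
  exact (ae_restrict_mem measurableSet_Ioc).mono fun x hx => Real.rpow_nonneg hx.1.le _

theorem lintegral_Ioi_rpow {β R : ℝ} (hβ : β < -1) (hR : 0 < R) :
    ∫⁻ τ in Set.Ioi R, ENNReal.ofReal (τ ^ β) = ENNReal.ofReal (-R ^ (β + 1) / (β + 1)) := by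
  rw [← ofReal_integral_eq_lintegral_ofReal (integrableOn_Ioi_rpow_of_lt hβ hR),
    integral_Ioi_rpow_of_lt hβ hR]
  exact (ae_restrict_mem measurableSet_Ioi).mono fun x hx =>
    Real.rpow_nonneg (hR.trans hx).le _

/-- The layer cake formula for a single extended nonnegative number. -/
theorem lintegral_indicator_lt_rpow {γ : ℝ} (hγ : 0 < γ) (a : ℝ≥0∞) :
    ∫⁻ l in Set.Ioi (0 : ℝ), {l : ℝ | ENNReal.ofReal l < a}.indicator
      (fun l => ENNReal.ofReal (γ * l ^ (γ - 1))) l = a ^ γ := by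
  have key : ∀ b : ℝ, 0 ≤ b → ∫⁻ l in Set.Ioc 0 b, ENNReal.ofReal (γ * l ^ (γ - 1)) =
      ENNReal.ofReal b ^ γ := by
    intro b hb
    simp_rw [ENNReal.ofReal_mul hγ.le]
    rw [lintegral_const_mul' _ _ ENNReal.ofReal_ne_top, lintegral_Ioc_rpow (by linarith) hb,
      ← ENNReal.ofReal_mul hγ.le, ENNReal.ofReal_rpow_of_nonneg hb hγ.le]
    congr 1
    rw [sub_add_cancel]
    field_simp
  have hmeas : MeasurableSet {l : ℝ | ENNReal.ofReal l < a} :=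
    measurableSet_lt ENNReal.measurable_ofReal measurable_const
  rw [setLIntegral_indicator hmeas]
  rcases eq_or_ne a ∞ with rfl | ha
  · rw [ENNReal.top_rpow_of_pos hγ]
    simp only [ENNReal.ofReal_lt_top, Set.ofPred_true, Set.univ_inter]
    refine ENNReal.eq_top_of_forall_nnreal_le fun r => ?_
    have h := key ((r : ℝ) ^ (1 / γ)) (by positivity)
    rw [ENNReal.ofReal_rpow_of_nonneg (by positivity) hγ.le, ← Real.rpow_mul (by positivity),
      one_div, inv_mul_cancel₀ hγ.ne', Real.rpow_one, ENNReal.ofReal_coe_nnreal] at h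
    rw [← h]
    exact lintegral_mono_set Set.Ioc_subset_Ioi_self
  · lift a to NNReal using ha
    have hset : {l : ℝ | ENNReal.ofReal l < a} ∩ Set.Ioi 0 = Set.Ioo 0 (a : ℝ) := by
      ext l
      simp only [Set.mem_inter_iff, Set.mem_ofPred_eq, Set.mem_Ioi, Set.mem_Ioo]
      rw [and_comm]
      refine and_congr_right fun hl => ?_
      rw [← ENNReal.ofReal_coe_nnreal, ENNReal.ofReal_lt_ofReal_iff_of_nonneg hl.le]
    rw [hset, setLIntegral_congr Ioo_ae_eq_Ioc]
    exact (key a a.2).trans (by rw [ENNReal.ofReal_coe_nnreal])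

theorem lintegral_rpow_eq_lintegral_meas_ofReal_lt {X : Type*} [MeasurableSpace X] (μ : Measure X)
    [SFinite μ] {γ : ℝ} (hγ : 0 < γ) {F : X → ℝ≥0∞} (hF : Measurable F) :
    ∫⁻ x, F x ^ γ ∂μ =
      ∫⁻ l in Set.Ioi (0 : ℝ), μ {x | ENNReal.ofReal l < F x} *
        ENNReal.ofReal (γ * l ^ (γ - 1)) := by
  simp_rw [← lintegral_indicator_lt_rpow hγ]
  have hs : MeasurableSet {z : X × ℝ | ENNReal.ofReal z.2 < F z.1} :=
    measurableSet_lt (ENNReal.measurable_ofReal.comp measurable_snd) (hF.comp measurable_fst)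
  rw [lintegral_lintegral_swap]
  · refine lintegral_congr fun l => ?_
    have : ∀ x, {l : ℝ | ENNReal.ofReal l < F x}.indicator
        (fun l => ENNReal.ofReal (γ * l ^ (γ - 1))) l =
        {x | ENNReal.ofReal l < F x}.indicator
          (fun _ => ENNReal.ofReal (γ * l ^ (γ - 1))) x := fun x => rfl
    simp_rw [this]
    rw [lintegral_indicator (measurableSet_lt measurable_const hF), setLIntegral_const, mul_comm]
  · have : (Function.uncurry fun x l => {l : ℝ | ENNReal.ofReal l < F x}.indicator
        (fun l => ENNReal.ofReal (γ * l ^ (γ - 1))) l) =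
        {z : X × ℝ | ENNReal.ofReal z.2 < F z.1}.indicator
          (fun z => ENNReal.ofReal (γ * z.2 ^ (γ - 1))) := by
      ext ⟨x, l⟩; rfl
    rw [this]
    exact (Measurable.indicator (by fun_prop) hs).aemeasurable

/-- The one-sided fractional integration kernel of order `1 - α`. -/
def fracKernel (α τ : ℝ) : ℝ≥0∞ :=
  (Set.Ioi (0 : ℝ)).indicator (fun τ => ENNReal.ofReal (τ ^ (-α))) τ

@[fun_prop]
theorem measurable_fracKernel (α : ℝ) : Measurable (fracKernel α) :=
  Measurable.indicator (by fun_prop) measurableSet_Ioi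

theorem fracKernel_eq_add (α : ℝ) {R : ℝ} (hR : 0 < R) (τ : ℝ) :
    fracKernel α τ = (Set.Ioi R).indicator (fun τ => ENNReal.ofReal (τ ^ (-α))) τ +
      (Set.Ioc 0 R).indicator (fun τ => ENNReal.ofReal (τ ^ (-α))) τ := by
  have h := congrFun (Set.indicator_union_of_disjoint
    (Set.disjoint_left.2 fun x (hx : x ∈ Set.Ioc 0 R) (hx' : x ∈ Set.Ioi R) => not_lt.2 hx.2 hx')
    (fun τ : ℝ => ENNReal.ofReal (τ ^ (-α)))) τ
  rw [Set.Ioc_union_Ioi_eq_Ioi hR.le] at h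
  rw [add_comm]
  exact h

/-- Hölder's inequality for the part of the fractional integral away from the diagonal. -/
theorem lintegral_far_le {p q α : ℝ} (hp : 1 < p) (hq : 0 < q) (hα : α = 1 + 1 / q - 1 / p) :
    ∃ c : ℝ, 0 < c ∧ ∀ m : ℝ → ℝ≥0∞, Measurable m → ∫⁻ s, m s ^ p ≤ 1 → ∀ R : ℝ, 0 < R → ∀ t : ℝ,
      ∫⁻ s, (Set.Ioi R).indicator (fun τ => ENNReal.ofReal (τ ^ (-α))) (t - s) * m s ≤
        ENNReal.ofReal (c * R ^ (-1 / q)) := by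
  have hpq := Real.HolderConjugate.conjExponent hp
  set p' := p.conjExponent
  have hp'0 : 0 < p' := hpq.symm.pos
  have hinv : 1 / p' = 1 - 1 / p := by
    have := hpq.inv_add_inv_eq_one
    rw [one_div, one_div]; linarith
  have hαp : -α * p' = -1 - p' / q := by
    have : α = 1 / p' + 1 / q := by rw [hα, hinv]; ring
    rw [this]; field_simp; ring
  have hd : 0 < p' / q := by positivity
  refine ⟨(p' / q)⁻¹ ^ (1 / p'), by positivity, fun m hm hm1 R hR t => ?_⟩
  have hmk : Measurable fun s => (Set.Ioi R).indicator
      (fun τ : ℝ => ENNReal.ofReal (τ ^ (-α))) (t - s) :=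
    (Measurable.indicator (f := fun τ : ℝ => ENNReal.ofReal (τ ^ (-α)))
      (by fun_prop) measurableSet_Ioi).comp (measurable_const.sub measurable_id)
  have h1 := ENNReal.lintegral_mul_le_Lp_mul_Lq volume hpq.symm hmk.aemeasurable hm.aemeasurable
  refine h1.trans ?_
  have h2 : ∫⁻ s, (Set.Ioi R).indicator (fun τ => ENNReal.ofReal (τ ^ (-α))) (t - s) ^ p' =
      ENNReal.ofReal (R ^ (-(p' / q)) / (p' / q)) := by
    rw [lintegral_sub_left_eq_self (fun τ => (Set.Ioi R).indicator
      (fun τ : ℝ => ENNReal.ofReal (τ ^ (-α))) τ ^ p') t]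
    have : ∀ τ, (Set.Ioi R).indicator (fun τ : ℝ => ENNReal.ofReal (τ ^ (-α))) τ ^ p' =
        (Set.Ioi R).indicator (fun τ : ℝ => ENNReal.ofReal (τ ^ (-1 - p' / q))) τ := by
      intro τ
      by_cases h : τ ∈ Set.Ioi R
      · have h0 : 0 < τ := hR.trans h
        rw [Set.indicator_of_mem h, Set.indicator_of_mem h,
          ENNReal.ofReal_rpow_of_pos (by positivity), ← Real.rpow_mul h0.le, hαp]
      · rw [Set.indicator_of_notMem h, Set.indicator_of_notMem h, ENNReal.zero_rpow_of_pos hp'0]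
    simp_rw [this]
    rw [lintegral_indicator measurableSet_Ioi, lintegral_Ioi_rpow (by linarith) hR]
    congr 1
    rw [show -1 - p' / q + 1 = -(p' / q) by ring, neg_div_neg_eq]
  rw [h2]
  calc _ ≤ ENNReal.ofReal (R ^ (-(p' / q)) / (p' / q)) ^ (1 / p') * 1 := by
        gcongr
        exact ENNReal.rpow_le_one hm1 (by positivity)
    _ = _ := by
        rw [mul_one, ENNReal.ofReal_rpow_of_pos (by positivity), div_eq_mul_inv,
          Real.mul_rpow (by positivity) (by positivity), ← Real.rpow_mul hR.le, mul_comm]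
        congr 3
        field_simp

theorem lintegral_near_eq {α R : ℝ} (hα : α < 1) (hR : 0 < R) :
    ∫⁻ τ, (Set.Ioc 0 R).indicator (fun τ => ENNReal.ofReal (τ ^ (-α))) τ =
      ENNReal.ofReal ((1 - α)⁻¹ * R ^ (1 - α)) := by
  rw [lintegral_indicator measurableSet_Ioc, lintegral_Ioc_rpow (by linarith) hR.le]
  congr 1
  rw [neg_add_eq_sub, div_eq_inv_mul]

theorem lintegral_lintegral_conv {k h : ℝ → ℝ≥0∞} (hk : Measurable k) (hh : Measurable h) :
    ∫⁻ t, ∫⁻ s, k (t - s) * h s = (∫⁻ τ, k τ) * ∫⁻ s, h s := by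
  rw [lintegral_lintegral_swap (by fun_prop), ← lintegral_const_mul _ hh]
  refine lintegral_congr fun s => ?_
  rw [lintegral_mul_const _ (by fun_prop), lintegral_sub_right_eq_self k s]

/-- Splitting the fractional integral at height `l`: if it is larger than a multiple of `l`, then
so is the contribution of the large values of `m` near the diagonal. -/
theorem meas_fracKernel_conv_le {p q α : ℝ} (hp : 1 < p) (hpq : p < q)
    (hα : α = 1 + 1 / q - 1 / p) :
    ∃ B : ℝ, 0 < B ∧ ∀ m : ℝ → ℝ≥0∞, Measurable m → ∫⁻ s, m s ^ p ≤ 1 → ∀ l : ℝ, 0 < l →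
      volume {t | ENNReal.ofReal (B * l) < ∫⁻ s, fracKernel α (t - s) * m s} ≤
        ENNReal.ofReal ((1 - α)⁻¹ * l ^ (-(q / p))) *
          ∫⁻ s, {s | ENNReal.ofReal (l ^ (q / p)) < m s}.indicator m s := by
  have hp0 : 0 < p := by linarith
  have hq0 : 0 < q := by linarith
  have hα1 : 0 < 1 - α := by
    have := one_div_lt_one_div_of_lt hp0 hpq
    linarith
  have hqα : q * (1 - α) = q / p - 1 := by
    rw [hα]; field_simp; ring
  obtain ⟨c, hc, hfar⟩ := lintegral_far_le hp hq0 hα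
  refine ⟨c + (1 - α)⁻¹ + 1, by positivity, fun m hm hm1 l hl => ?_⟩
  set R : ℝ := l ^ (-q) with hR
  have hR0 : 0 < R := by positivity
  set a : ℝ := l ^ (q / p) with ha
  have ha0 : 0 < a := by positivity
  set mh : ℝ → ℝ≥0∞ := {s | ENNReal.ofReal a < m s}.indicator m with hmh
  have hmhm : Measurable mh := hm.indicator (measurableSet_lt measurable_const hm)
  set kn : ℝ → ℝ≥0∞ := (Set.Ioc 0 R).indicator (fun τ => ENNReal.ofReal (τ ^ (-α)))
  have hknm : Measurable kn := Measurable.indicator (by fun_prop) measurableSet_Ioc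
  have hknR : ∫⁻ τ, kn τ = ENNReal.ofReal ((1 - α)⁻¹ * R ^ (1 - α)) :=
    lintegral_near_eq (by linarith) hR0
  have hRα : R ^ (1 - α) = l ^ (1 - q / p) := by
    rw [hR, ← Real.rpow_mul hl.le]; congr 1; linarith
  have hRq : R ^ (-1 / q) = l := by
    rw [hR, ← Real.rpow_mul hl.le]
    rw [show -q * (-1 / q) = 1 by field_simp, Real.rpow_one]
  have hRa : R ^ (1 - α) * a = l := by
    rw [hRα, ha, ← Real.rpow_add hl]
    rw [show 1 - q / p + q / p = 1 by ring, Real.rpow_one]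
  have hsplit : ∀ t, ∫⁻ s, fracKernel α (t - s) * m s ≤
      ENNReal.ofReal (c * l) + ENNReal.ofReal ((1 - α)⁻¹ * l) + ∫⁻ s, kn (t - s) * mh s := by
    intro t
    have hms : ∀ s, m s ≤ ENNReal.ofReal a + mh s := by
      intro s
      by_cases hs : ENNReal.ofReal a < m s
      · rw [hmh, Set.indicator_of_mem (show s ∈ {s | ENNReal.ofReal a < m s} from hs)]
        exact le_add_self
      · exact (not_lt.1 hs).trans le_self_add
    calc _ ≤ ∫⁻ s, (((Set.Ioi R).indicator (fun τ => ENNReal.ofReal (τ ^ (-α))) (t - s) * m s +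
          kn (t - s) * ENNReal.ofReal a) + kn (t - s) * mh s) := by
          refine lintegral_mono fun s => ?_
          rw [fracKernel_eq_add α hR0, add_mul, add_assoc, ← mul_add]
          gcongr
          exact hms s
      _ = ((∫⁻ s, (Set.Ioi R).indicator (fun τ => ENNReal.ofReal (τ ^ (-α))) (t - s) * m s) +
          (∫⁻ s, kn (t - s)) * ENNReal.ofReal a) + ∫⁻ s, kn (t - s) * mh s := by
          rw [lintegral_add_right _ (by fun_prop), lintegral_add_right _ (by fun_prop),
            lintegral_mul_const _ (by fun_prop)]
      _ ≤ _ := by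
          gcongr
          · refine (hfar m hm hm1 R hR0 t).trans ?_
            rw [hRq]
          · rw [lintegral_sub_left_eq_self kn t, hknR, ← ENNReal.ofReal_mul (by positivity),
              mul_assoc, hRa]
  calc _ ≤ volume {t | ENNReal.ofReal l ≤ ∫⁻ s, kn (t - s) * mh s} := by
        refine measure_mono fun t ht => ?_
        by_contra hcon
        have hcon' : ∫⁻ s, kn (t - s) * mh s < ENNReal.ofReal l := not_le.1 hcon
        refine (lt_irrefl _ ((show ENNReal.ofReal ((c + (1 - α)⁻¹ + 1) * l) < _ from ht).trans_le
          ((hsplit t).trans ((add_le_add_right hcon'.le _).trans ?_))))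
        rw [← ENNReal.ofReal_add (by positivity) (by positivity),
          ← ENNReal.ofReal_add (by positivity) (by positivity)]
        exact ENNReal.ofReal_le_ofReal (by linarith)
    _ ≤ (∫⁻ t, ∫⁻ s, kn (t - s) * mh s) / ENNReal.ofReal l := by
        refine meas_ge_le_lintegral_div ?_ (by simpa using hl) ENNReal.ofReal_ne_top
        exact (Measurable.lintegral_prod_right' (f := fun z : ℝ × ℝ => kn (z.1 - z.2) * mh z.2)
          (by fun_prop)).aemeasurable
    _ = _ := by
        rw [lintegral_lintegral_conv hknm hmhm, hknR, hRα, div_eq_mul_inv, mul_right_comm,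
          ← ENNReal.ofReal_inv_of_pos hl, ← ENNReal.ofReal_mul (by positivity), mul_assoc,
          ← Real.rpow_neg_one l, ← Real.rpow_add hl]
        congr 4
        ring

theorem lintegral_fracKernel_conv_rpow_le_of_le_one {p q α : ℝ} (hp : 1 < p) (hpq : p < q)
    (hα : α = 1 + 1 / q - 1 / p) :
    ∃ C : ℝ, 0 < C ∧ ∀ m : ℝ → ℝ≥0∞, Measurable m → ∫⁻ s, m s ^ p ≤ 1 →
      ∫⁻ t, (∫⁻ s, fracKernel α (t - s) * m s) ^ q ≤ ENNReal.ofReal C := by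
  have hp0 : 0 < p := by linarith
  have hq0 : 0 < q := by linarith
  have hα1 : 0 < 1 - α := by
    have := one_div_lt_one_div_of_lt hp0 hpq
    linarith
  obtain ⟨B, hB, hmeas⟩ := meas_fracKernel_conv_le hp hpq hα
  set γ : ℝ := q - q / p with hγ
  have hγ0 : 0 < γ := by
    rw [hγ, sub_pos]; exact div_lt_self hq0 hp
  refine ⟨B ^ q * ((1 - α)⁻¹ * (q / γ)), by positivity, fun m hm hm1 => ?_⟩
  set F : ℝ → ℝ≥0∞ := fun t => ∫⁻ s, fracKernel α (t - s) * m s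
  have hFm : Measurable F := Measurable.lintegral_prod_right'
    (f := fun z : ℝ × ℝ => fracKernel α (z.1 - z.2) * m z.2) (by fun_prop)
  have hB0 : ENNReal.ofReal B ≠ 0 := by simpa using hB
  have hscale : ∀ t, F t ^ q = ENNReal.ofReal B ^ q * (F t / ENNReal.ofReal B) ^ q := by
    intro t
    rw [← ENNReal.mul_rpow_of_nonneg _ _ hq0.le, ENNReal.mul_div_cancel hB0 ENNReal.ofReal_ne_top]
  calc ∫⁻ t, F t ^ q = ENNReal.ofReal B ^ q * ∫⁻ t, (F t / ENNReal.ofReal B) ^ q := by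
        simp_rw [hscale]
        rw [lintegral_const_mul _ (by fun_prop)]
    _ = ENNReal.ofReal B ^ q * ∫⁻ l in Set.Ioi (0 : ℝ),
          volume {t | ENNReal.ofReal l < F t / ENNReal.ofReal B} *
            ENNReal.ofReal (q * l ^ (q - 1)) := by
        rw [lintegral_rpow_eq_lintegral_meas_ofReal_lt _ hq0 (by fun_prop)]
    _ ≤ ENNReal.ofReal B ^ q * ∫⁻ l in Set.Ioi (0 : ℝ), ∫⁻ s,
          ENNReal.ofReal ((1 - α)⁻¹ * (q / γ)) * (m s * {l : ℝ | ENNReal.ofReal l <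
            m s ^ (p / q)}.indicator (fun l => ENNReal.ofReal (γ * l ^ (γ - 1))) l) := by
        refine mul_le_mul' le_rfl ?_
        refine setLIntegral_mono' measurableSet_Ioi fun l (hl : 0 < l) => ?_
        have hset : {t | ENNReal.ofReal l < F t / ENNReal.ofReal B} =
            {t | ENNReal.ofReal (B * l) < F t} := by
          ext t
          rw [Set.mem_ofPred_eq, Set.mem_ofPred_eq, ENNReal.lt_div_iff_mul_lt (Or.inl hB0)
            (Or.inl ENNReal.ofReal_ne_top), ← ENNReal.ofReal_mul hl.le, mul_comm]
        rw [hset]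
        calc _ ≤ (ENNReal.ofReal ((1 - α)⁻¹ * l ^ (-(q / p))) *
              ∫⁻ s, {s | ENNReal.ofReal (l ^ (q / p)) < m s}.indicator m s) *
                ENNReal.ofReal (q * l ^ (q - 1)) := by
              gcongr
              exact hmeas m hm hm1 l hl
          _ = ∫⁻ s, ENNReal.ofReal ((1 - α)⁻¹ * (q / γ)) * ENNReal.ofReal (γ * l ^ (γ - 1)) *
                {s | ENNReal.ofReal (l ^ (q / p)) < m s}.indicator m s := by
              rw [lintegral_const_mul _ (hm.indicator (measurableSet_lt measurable_const hm)),
                mul_right_comm, ← ENNReal.ofReal_mul (by positivity),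
                ← ENNReal.ofReal_mul (by positivity)]
              congr 2
              have : l ^ (γ - 1) = l ^ (-(q / p)) * l ^ (q - 1) := by
                rw [← Real.rpow_add hl]; congr 1; rw [hγ]; ring
              rw [this]
              field_simp
          _ ≤ _ := by
              refine lintegral_mono fun s => ?_
              rw [mul_assoc]
              refine mul_le_mul' le_rfl ?_
              by_cases h : ENNReal.ofReal (l ^ (q / p)) < m s
              · have h' : ENNReal.ofReal l < m s ^ (p / q) := by
                  have := ENNReal.rpow_lt_rpow h (show 0 < p / q by positivity)
                  rwa [ENNReal.ofReal_rpow_of_pos (by positivity), ← Real.rpow_mul hl.le,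
                    show q / p * (p / q) = 1 by field_simp, Real.rpow_one] at this
                rw [Set.indicator_of_mem (show s ∈ {s | _ < m s} from h),
                  Set.indicator_of_mem (show l ∈ {l : ℝ | ENNReal.ofReal l < _} from h'), mul_comm]
              · rw [Set.indicator_of_notMem (show s ∉ {s | _ < m s} from h), mul_zero]
                exact zero_le
    _ = ENNReal.ofReal B ^ q * ∫⁻ s, ∫⁻ l in Set.Ioi (0 : ℝ),
          ENNReal.ofReal ((1 - α)⁻¹ * (q / γ)) * (m s * {l : ℝ | ENNReal.ofReal l <
            m s ^ (p / q)}.indicator (fun l => ENNReal.ofReal (γ * l ^ (γ - 1))) l) := by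
        rw [lintegral_lintegral_swap]
        have hs' : MeasurableSet {z : ℝ × ℝ | ENNReal.ofReal z.1 < m z.2 ^ (p / q)} :=
          measurableSet_lt (by fun_prop) (by fun_prop)
        have : Measurable ({z : ℝ × ℝ | ENNReal.ofReal z.1 < m z.2 ^ (p / q)}.indicator
          (fun z => ENNReal.ofReal (γ * z.1 ^ (γ - 1)))) := Measurable.indicator (by fun_prop) hs'
        exact (measurable_const.mul ((hm.comp measurable_snd).mul this)).aemeasurable
    _ = ENNReal.ofReal B ^ q * ∫⁻ s, ENNReal.ofReal ((1 - α)⁻¹ * (q / γ)) * m s ^ p := by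
        congr 1
        refine lintegral_congr fun s => ?_
        have hi : Measurable ({l : ℝ | ENNReal.ofReal l < m s ^ (p / q)}.indicator
            (fun l => ENNReal.ofReal (γ * l ^ (γ - 1)))) :=
          Measurable.indicator (by fun_prop) (measurableSet_lt (by fun_prop) measurable_const)
        rw [lintegral_const_mul _ (hi.const_mul _), lintegral_const_mul _ hi,
          lintegral_indicator_lt_rpow hγ0, ← ENNReal.rpow_mul]
        congr 1
        have : p / q * γ = p - 1 := by rw [hγ]; field_simp
        rw [this]
        nth_rewrite 1 [← ENNReal.rpow_one (m s)]
        rw [← ENNReal.rpow_add_of_nonneg _ _ zero_le_one (by linarith)]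
        congr 1
        ring
    _ ≤ ENNReal.ofReal B ^ q * (ENNReal.ofReal ((1 - α)⁻¹ * (q / γ)) * 1) := by
        rw [lintegral_const_mul _ (by fun_prop)]
        gcongr
    _ = _ := by
        rw [mul_one, ENNReal.ofReal_rpow_of_pos hB, ← ENNReal.ofReal_mul (by positivity)]

/-- The Hardy–Littlewood–Sobolev inequality on the half line. -/
theorem lintegral_fracKernel_conv_rpow_le {p q α : ℝ} (hp : 1 < p) (hpq : p < q)
    (hα : α = 1 + 1 / q - 1 / p) :
    ∃ C : ℝ, 0 < C ∧ ∀ m : ℝ → ℝ≥0∞, Measurable m →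
      (∫⁻ t, (∫⁻ s, fracKernel α (t - s) * m s) ^ q) ^ (1 / q) ≤
        ENNReal.ofReal C * (∫⁻ s, m s ^ p) ^ (1 / p) := by
  have hp0 : 0 < p := by linarith
  have hq0 : 0 < q := by linarith
  obtain ⟨C, hC, hle⟩ := lintegral_fracKernel_conv_rpow_le_of_le_one hp hpq hα
  refine ⟨C ^ (1 / q), by positivity, fun m hm => ?_⟩
  set A : ℝ≥0∞ := (∫⁻ s, m s ^ p) ^ (1 / p) with hA
  have hAp : ∫⁻ s, m s ^ p = A ^ p := by
    rw [hA, ← ENNReal.rpow_mul, one_div, inv_mul_cancel₀ hp0.ne', ENNReal.rpow_one]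
  rcases eq_or_ne A ∞ with hAt | hAt
  · rw [hAt, ENNReal.mul_top (by simpa using by positivity)]
    exact le_top
  rcases eq_or_ne A 0 with hA0 | hA0
  · rw [hA0, ENNReal.zero_rpow_of_pos hp0, lintegral_eq_zero_iff (by fun_prop)] at hAp
    have hm0 : ∀ t, ∫⁻ s, fracKernel α (t - s) * m s = 0 := by
      intro t
      rw [lintegral_eq_zero_iff (by fun_prop)]
      filter_upwards [hAp] with s hs
      have : m s = 0 := by simpa [hp0, hp0.not_gt] using hs
      simp [this]
    simp [hm0, hq0]
  have h1 := hle (fun s => A⁻¹ * m s) (by fun_prop) (by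
    simp_rw [ENNReal.mul_rpow_of_nonneg _ _ hp0.le]
    rw [lintegral_const_mul _ (by fun_prop), hAp, ← ENNReal.mul_rpow_of_nonneg _ _ hp0.le,
      ENNReal.inv_mul_cancel hA0 hAt, ENNReal.one_rpow])
  have h2 : ∀ t, ∫⁻ s, fracKernel α (t - s) * m s =
      A * ∫⁻ s, fracKernel α (t - s) * (A⁻¹ * m s) := by
    intro t
    rw [← lintegral_const_mul _ (by fun_prop)]
    refine lintegral_congr fun s => ?_
    rw [mul_left_comm, ← mul_assoc A, ENNReal.mul_inv_cancel hA0 hAt, one_mul]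
  have hmeas : Measurable fun t => ∫⁻ s, fracKernel α (t - s) * (A⁻¹ * m s) :=
    Measurable.lintegral_prod_right'
      (f := fun z : ℝ × ℝ => fracKernel α (z.1 - z.2) * (A⁻¹ * m z.2)) (by fun_prop)
  simp_rw [h2, ENNReal.mul_rpow_of_nonneg _ _ hq0.le]
  rw [lintegral_const_mul _ (by fun_prop), ENNReal.mul_rpow_of_nonneg _ _ (by positivity),
    ← ENNReal.rpow_mul, mul_one_div_cancel hq0.ne', ENNReal.rpow_one, mul_comm,
    ← ENNReal.ofReal_rpow_of_pos hC]
  gcongr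

/-- Jensen's inequality for a weight `b`, in the form of a Hölder inequality. -/
theorem lintegral_rpow_le_mul_lintegral_rpow {X : Type*} [MeasurableSpace X] {μ : Measure X}
    {q : ℝ} (hq : 1 ≤ q) {f b : X → ℝ≥0∞} (hf : AEMeasurable f μ) (hb : AEMeasurable b μ)
    (hb0 : ∀ᵐ x ∂μ, b x ≠ 0) (hbt : ∀ᵐ x ∂μ, b x ≠ ∞) :
    (∫⁻ x, f x ∂μ) ^ q ≤ (∫⁻ x, f x ^ q * b x ^ (1 - q) ∂μ) * (∫⁻ x, b x ∂μ) ^ (q - 1) := by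
  rcases hq.eq_or_lt with rfl | hq
  · simp
  have hq0 : 0 < q := by linarith
  have hqq := Real.HolderConjugate.conjExponent hq
  set q' := q.conjExponent
  have hq'0 : 0 < q' := hqq.symm.pos
  have hinv : 1 / q' = 1 - 1 / q := by
    have := hqq.inv_add_inv_eq_one
    rw [one_div, one_div]; linarith
  have h1 := ENNReal.lintegral_mul_le_Lp_mul_Lq μ hqq
    (f := fun x => f x * b x ^ (-(1 / q'))) (g := fun x => b x ^ (1 / q'))
    (by fun_prop) (by fun_prop)
  have h2 : ∫⁻ x, f x ∂μ =
      ∫⁻ x, ((fun x => f x * b x ^ (-(1 / q'))) * fun x => b x ^ (1 / q')) x ∂μ := by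
    refine lintegral_congr_ae ?_
    filter_upwards [hb0, hbt] with x h0 ht
    simp only [Pi.mul_apply]
    rw [mul_assoc, ← ENNReal.rpow_add _ _ h0 ht, neg_add_cancel, ENNReal.rpow_zero, mul_one]
  have h3 : ∀ x, (f x * b x ^ (-(1 / q'))) ^ q = f x ^ q * b x ^ (1 - q) := by
    intro x
    rw [ENNReal.mul_rpow_of_nonneg _ _ hq0.le, ← ENNReal.rpow_mul, hinv]
    congr 2
    field_simp
    ring
  have h4 : ∀ x, (b x ^ (1 / q')) ^ q' = b x := by
    intro x
    rw [← ENNReal.rpow_mul, one_div_mul_cancel hq'0.ne', ENNReal.rpow_one]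
  rw [← h2] at h1
  simp only [h3, h4] at h1
  calc _ ≤ ((∫⁻ x, f x ^ q * b x ^ (1 - q) ∂μ) ^ (1 / q) * (∫⁻ x, b x ∂μ) ^ (1 / q')) ^ q := by
        gcongr
    _ = _ := by
        rw [ENNReal.mul_rpow_of_nonneg _ _ hq0.le, ← ENNReal.rpow_mul, ← ENNReal.rpow_mul,
          one_div_mul_cancel hq0.ne', ENNReal.rpow_one, hinv]
        congr 2
        field_simp

/-- Minkowski's integral inequality, with a majorant of the inner norms. -/
theorem lintegral_lintegral_rpow_le {S X : Type*} [MeasurableSpace S] [MeasurableSpace X]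
    {μ : Measure S} {ν : Measure X} [SigmaFinite μ] [SFinite ν] {q : ℝ} (hq : 1 ≤ q)
    {φ : S → X → ℝ≥0∞} (hφ : Measurable (Function.uncurry φ)) {b : S → ℝ≥0∞} (hb : Measurable b)
    (h : ∀ᵐ s ∂μ, ∫⁻ x, φ s x ^ q ∂ν ≤ b s ^ q) :
    ∫⁻ x, (∫⁻ s, φ s x ∂μ) ^ q ∂ν ≤ (∫⁻ s, b s ∂μ) ^ q := by
  have hq0 : 0 < q := by linarith
  have key : ∀ b : S → ℝ≥0∞, Measurable b → (∀ s, b s ≠ 0) → ∫⁻ s, b s ∂μ ≠ ∞ →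
      (∀ᵐ s ∂μ, ∫⁻ x, φ s x ^ q ∂ν ≤ b s ^ q) →
      ∫⁻ x, (∫⁻ s, φ s x ∂μ) ^ q ∂ν ≤ (∫⁻ s, b s ∂μ) ^ q := by
    intro b hb hb0 hbM h
    have hbt : ∀ᵐ s ∂μ, b s ≠ ∞ := (ae_lt_top hb hbM).mono fun s hs => hs.ne
    have hφ1 : ∀ x, Measurable fun s => φ s x := fun x => hφ.comp measurable_prodMk_right
    have hφ2 : ∀ s, Measurable fun x => φ s x := fun s => hφ.comp measurable_prodMk_left
    have hψ : Measurable (Function.uncurry fun x s => φ s x ^ q * b s ^ (1 - q)) :=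
      ((hφ.comp measurable_swap).pow_const q).mul ((hb.comp measurable_snd).pow_const _)
    have hψ' : Measurable fun x => ∫⁻ s, φ s x ^ q * b s ^ (1 - q) ∂μ := hψ.lintegral_prod_right'
    calc _ ≤ ∫⁻ x, (∫⁻ s, φ s x ^ q * b s ^ (1 - q) ∂μ) * (∫⁻ s, b s ∂μ) ^ (q - 1) ∂ν :=
          lintegral_mono fun x => lintegral_rpow_le_mul_lintegral_rpow hq (hφ1 x).aemeasurable
            hb.aemeasurable (ae_of_all _ hb0) hbt
      _ = (∫⁻ s, (∫⁻ x, φ s x ^ q ∂ν) * b s ^ (1 - q) ∂μ) * (∫⁻ s, b s ∂μ) ^ (q - 1) := by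
          rw [lintegral_mul_const _ hψ',
            lintegral_lintegral_swap hψ.aemeasurable]
          congr 1
          refine lintegral_congr fun s => ?_
          rw [lintegral_mul_const _ ((hφ2 s).pow_const q)]
      _ ≤ (∫⁻ s, b s ∂μ) * (∫⁻ s, b s ∂μ) ^ (q - 1) := by
          refine mul_le_mul' (lintegral_mono_ae ?_) le_rfl
          filter_upwards [h, hbt] with s hs hst
          calc _ ≤ b s ^ q * b s ^ (1 - q) := by gcongr
            _ = b s := by
                rw [← ENNReal.rpow_add _ _ (hb0 s) hst, add_sub_cancel, ENNReal.rpow_one]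
      _ = _ := by
          nth_rewrite 1 [← ENNReal.rpow_one (∫⁻ s, b s ∂μ)]
          rw [← ENNReal.rpow_add_of_nonneg _ _ zero_le_one (by linarith), add_sub_cancel]
  rcases eq_or_ne (∫⁻ s, b s ∂μ) ∞ with hM | hM
  · rw [hM, ENNReal.top_rpow_of_pos hq0]
    exact le_top
  rw [← ENNReal.rpow_inv_le_iff hq0]
  refine ENNReal.le_of_forall_pos_le_add fun ε hε _ => ?_
  obtain ⟨g, hg0, hgm, hgε⟩ := exists_pos_lintegral_lt_of_sigmaFinite μ
    (ENNReal.coe_ne_zero.2 hε.ne')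
  rw [ENNReal.rpow_inv_le_iff hq0]
  have hsum : ∫⁻ s, b s + g s ∂μ ≤ ∫⁻ s, b s ∂μ + ε := by
    rw [lintegral_add_left hb]
    gcongr
  refine (key (fun s => b s + g s) (by fun_prop) (fun s => by simp [(hg0 s).ne'])
    (ne_top_of_le_ne_top (by simp [hM]) hsum) ?_).trans (by gcongr)
  filter_upwards [h] with s hs
  exact hs.trans (by gcongr; exact le_self_add)

/-- A function whose `r`-th power has finite lower integral has a largest measurable minorant. -/
theorem exists_measurable_maximal_minorant {X : Type*} [MeasurableSpace X] {μ : Measure X} {r : ℝ}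
    (hr : 0 < r) {w : X → ℝ≥0∞} (hw : ∫⁻ x, w x ^ r ∂μ ≠ ∞) :
    ∃ m : X → ℝ≥0∞, Measurable m ∧ ∫⁻ x, m x ^ r ∂μ = ∫⁻ x, w x ^ r ∂μ ∧
      ∀ u : X → ℝ≥0∞, AEMeasurable u μ → u ≤ᵐ[μ] w → u ≤ᵐ[μ] m := by
  obtain ⟨h, hm, hle, hint⟩ := exists_measurable_le_lintegral_eq μ fun x => w x ^ r
  have hpow : ∀ x, (h x ^ r⁻¹) ^ r = h x := fun x => ENNReal.rpow_inv_rpow hr.ne' _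
  refine ⟨fun x => h x ^ r⁻¹, by fun_prop, by simp_rw [hpow, hint], fun u hu huw => ?_⟩
  set v : X → ℝ≥0∞ := (toMeasurable μ {x | ¬ (u x = hu.mk u x ∧ u x ≤ w x)})ᶜ.indicator (hu.mk u)
    with hv
  have hvm : Measurable v := hu.measurable_mk.indicator (measurableSet_toMeasurable _ _).compl
  have hnull : μ (toMeasurable μ {x | ¬ (u x = hu.mk u x ∧ u x ≤ w x)}) = 0 := by
    rw [measure_toMeasurable]
    exact hu.ae_eq_mk.and huw
  have huv : u =ᵐ[μ] v := by
    filter_upwards [hu.ae_eq_mk, compl_mem_ae_iff.2 hnull] with x hx hx'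
    rw [hv, Set.indicator_of_mem hx', hx]
  have hvw : ∀ x, v x ≤ w x := by
    intro x
    by_cases hx : x ∈ (toMeasurable μ {x | ¬ (u x = hu.mk u x ∧ u x ≤ w x)})ᶜ
    · have : u x = hu.mk u x ∧ u x ≤ w x := by
        by_contra hcon
        exact hx (subset_toMeasurable _ _ hcon)
      rw [hv, Set.indicator_of_mem hx, ← this.1]
      exact this.2
    · rw [hv, Set.indicator_of_notMem hx]
      exact zero_le
  have hmax : h =ᵐ[μ] fun x => max (h x) (v x ^ r) := by
    refine ae_eq_of_ae_le_of_lintegral_le (ae_of_all _ fun x => le_max_left _ _) (hint ▸ hw)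
      (by fun_prop) ?_
    rw [← hint]
    exact lintegral_mono fun x => max_le (hle x) (ENNReal.rpow_le_rpow (hvw x) hr.le)
  filter_upwards [huv, hmax] with x hx hx'
  rw [hx, ENNReal.le_rpow_inv_iff hr, hx']
  exact le_max_right _ _

theorem heatKernel_pos (N : ℕ) {τ : ℝ} (hτ : 0 < τ) (x : EuclideanSpace ℝ (Fin N)) :
    0 < heatKernel N τ x := by
  unfold heatKernel; positivity

@[fun_prop]
theorem measurable_heatKernel (N : ℕ) (τ : ℝ) : Measurable (heatKernel N τ) := by
  unfold heatKernel; fun_prop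

theorem heatKernel_le (N : ℕ) {τ : ℝ} (hτ : 0 < τ) (x : EuclideanSpace ℝ (Fin N)) :
    heatKernel N τ x ≤ (4 * π * τ) ^ (-(N : ℝ) / 2) := by
  unfold heatKernel
  refine mul_le_of_le_one_right (by positivity) (Real.exp_le_one_iff.2 ?_)
  rw [neg_div]
  exact neg_nonpos.2 (by positivity)

theorem lintegral_heatKernel (N : ℕ) {τ : ℝ} (hτ : 0 < τ) :
    ∫⁻ x, ENNReal.ofReal (heatKernel N τ x) = 1 := by
  have hb : 0 < 1 / (4 * τ) := by positivity
  have hform : ∀ x : EuclideanSpace ℝ (Fin N), heatKernel N τ x =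
      (4 * π * τ) ^ (-(N : ℝ) / 2) * Real.exp (-(1 / (4 * τ)) * ‖x‖ ^ 2) := by
    intro x
    unfold heatKernel
    congr 2
    ring
  have hI := GaussianFourier.integral_rexp_neg_mul_sq_norm (V := EuclideanSpace ℝ (Fin N)) hb
  have hval : ∫ x, heatKernel N τ x = 1 := by
    simp_rw [hform]
    rw [integral_const_mul, hI, finrank_euclideanSpace_fin,
      show π / (1 / (4 * τ)) = 4 * π * τ by field_simp, ← Real.rpow_add (by positivity),
      neg_div, neg_add_cancel, Real.rpow_zero]
  have hint : Integrable (heatKernel N τ) := by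
    by_contra hcon
    rw [integral_undef hcon] at hval
    exact zero_ne_one hval
  rw [← ofReal_integral_eq_lintegral_ofReal hint (ae_of_all _ fun x => (heatKernel_pos N hτ x).le),
    hval, ENNReal.ofReal_one]

/-- A Harnack-type comparison of the heat kernel at nearby points. -/
theorem heatKernel_le_mul_heatKernel (N : ℕ) {τ : ℝ} (hτ : 0 < τ)
    {x x' : EuclideanSpace ℝ (Fin N)} (h : dist x x' ≤ √τ) :
    heatKernel N τ x' ≤ 2 ^ ((N : ℝ) / 2) * Real.exp (1 / 4) * heatKernel N (2 * τ) x := by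
  have hd : ‖x - x'‖ ^ 2 ≤ τ := by
    rw [← dist_eq_norm]
    calc dist x x' ^ 2 ≤ √τ ^ 2 := by gcongr
      _ = τ := Real.sq_sqrt hτ.le
  have htri : ‖x‖ ^ 2 ≤ 2 * ‖x'‖ ^ 2 + 2 * τ := by
    have : ‖x‖ ≤ ‖x'‖ + ‖x - x'‖ := by
      simpa using norm_add_le x' (x - x')
    nlinarith [norm_nonneg x, norm_nonneg x', norm_nonneg (x - x'),
      sq_nonneg (‖x'‖ - ‖x - x'‖)]
  unfold heatKernel
  have h1 : (4 * π * (2 * τ)) ^ (-(N : ℝ) / 2) =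
      2 ^ (-(N : ℝ) / 2) * (4 * π * τ) ^ (-(N : ℝ) / 2) := by
    rw [← Real.mul_rpow (by positivity) (by positivity)]
    congr 1; ring
  have h2 : (2 : ℝ) ^ ((N : ℝ) / 2) * 2 ^ (-(N : ℝ) / 2) = 1 := by
    rw [← Real.rpow_add two_pos, neg_div, add_neg_cancel, Real.rpow_zero]
  calc _ ≤ (4 * π * τ) ^ (-(N : ℝ) / 2) *
        (Real.exp (1 / 4) * Real.exp (-‖x‖ ^ 2 / (4 * (2 * τ)))) := by
        rw [← Real.exp_add]
        gcongr
        rw [← sub_nonneg]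
        have : 1 / 4 + -‖x‖ ^ 2 / (4 * (2 * τ)) - -‖x'‖ ^ 2 / (4 * τ) =
            (2 * ‖x'‖ ^ 2 + 2 * τ - ‖x‖ ^ 2) / (8 * τ) := by
          field_simp; ring
        rw [this]
        exact div_nonneg (by linarith) (by positivity)
    _ = _ := by
        rw [h1]
        linear_combination (-(4 * π * τ) ^ (-(N : ℝ) / 2) *
          (Real.exp (1 / 4) * Real.exp (-‖x‖ ^ 2 / (4 * (2 * τ))))) * h2

section

variable {N : ℕ}

/-- Jensen's inequality for the heat semigroup, without any measurability assumption. -/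
theorem enorm_integral_heatKernel_rpow_le {p : ℝ} (hp : 1 ≤ p) {τ : ℝ} (hτ : 0 < τ)
    (g : EuclideanSpace ℝ (Fin N) → ℝ) (x : EuclideanSpace ℝ (Fin N)) :
    ‖∫ y, heatKernel N τ (x - y) * g y‖ₑ ^ p ≤
      ∫⁻ y, ENNReal.ofReal (heatKernel N τ (x - y)) * ‖g y‖ₑ ^ p := by
  have hp0 : 0 < p := by linarith
  by_cases hint : Integrable fun y => heatKernel N τ (x - y) * g y
  · have hK0 : ∀ y, ENNReal.ofReal (heatKernel N τ (x - y)) ≠ 0 := fun y => by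
      simpa using heatKernel_pos N hτ (x - y)
    have h1 := lintegral_rpow_le_mul_lintegral_rpow (μ := volume) hp
      hint.aestronglyMeasurable.enorm
      (b := fun y => ENNReal.ofReal (heatKernel N τ (x - y))) (by fun_prop) (ae_of_all _ hK0)
      (ae_of_all _ fun y => ENNReal.ofReal_ne_top)
    rw [lintegral_sub_left_eq_self (fun z => ENNReal.ofReal (heatKernel N τ z)) x,
      lintegral_heatKernel N hτ, ENNReal.one_rpow, mul_one] at h1
    calc _ ≤ (∫⁻ y, ‖heatKernel N τ (x - y) * g y‖ₑ) ^ p := by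
          gcongr
          exact enorm_integral_le_lintegral_enorm _
      _ ≤ _ := h1
      _ = _ := by
          refine lintegral_congr fun y => ?_
          rw [enorm_mul, Real.enorm_of_nonneg (heatKernel_pos N hτ _).le,
            ENNReal.mul_rpow_of_nonneg _ _ hp0.le, mul_right_comm,
            ← ENNReal.rpow_add _ _ (hK0 y) ENNReal.ofReal_ne_top, add_sub_cancel, ENNReal.rpow_one]
  · rw [integral_undef hint, enorm_zero, ENNReal.zero_rpow_of_pos hp0]
    exact zero_le

theorem enorm_integral_heatKernel_rpow_le_lintegral {p : ℝ} (hp : 1 ≤ p) {τ : ℝ} (hτ : 0 < τ)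
    (g : EuclideanSpace ℝ (Fin N) → ℝ) (x : EuclideanSpace ℝ (Fin N)) :
    ‖∫ y, heatKernel N τ (x - y) * g y‖ₑ ^ p ≤
      ENNReal.ofReal ((4 * π * τ) ^ (-(N : ℝ) / 2)) * ∫⁻ y, ‖g y‖ₑ ^ p := by
  refine (enorm_integral_heatKernel_rpow_le hp hτ g x).trans ?_
  rw [← lintegral_const_mul' _ _ ENNReal.ofReal_ne_top]
  gcongr with y
  exact heatKernel_le N hτ _

theorem lintegral_enorm_integral_heatKernel_rpow_le {p : ℝ} (hp : 1 ≤ p) {τ : ℝ} (hτ : 0 < τ)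
    (g : EuclideanSpace ℝ (Fin N) → ℝ)
    {ρ : EuclideanSpace ℝ (Fin N) → EuclideanSpace ℝ (Fin N)} (hρ : ∀ x, dist x (ρ x) ≤ √τ) :
    ∫⁻ x, ‖∫ y, heatKernel N τ (ρ x - y) * g y‖ₑ ^ p ≤
      ENNReal.ofReal (2 ^ ((N : ℝ) / 2) * Real.exp (1 / 4)) * ∫⁻ y, ‖g y‖ₑ ^ p := by
  have hp0 : 0 < p := by linarith
  by_cases hg : AEStronglyMeasurable g
  · have hg' : AEMeasurable fun y => ‖g y‖ₑ ^ p := hg.enorm.pow_const p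
    set c : ℝ := 2 ^ ((N : ℝ) / 2) * Real.exp (1 / 4)
    calc _ ≤ ∫⁻ x, ∫⁻ y, ENNReal.ofReal c *
          (ENNReal.ofReal (heatKernel N (2 * τ) (x - y)) * ‖g y‖ₑ ^ p) := by
          refine lintegral_mono fun x => ?_
          refine (enorm_integral_heatKernel_rpow_le hp hτ g (ρ x)).trans ?_
          refine lintegral_mono fun y => ?_
          rw [← mul_assoc, ← ENNReal.ofReal_mul (by positivity)]
          gcongr
          exact heatKernel_le_mul_heatKernel N hτ (by simpa using hρ x)
      _ = ∫⁻ y, ∫⁻ x, ENNReal.ofReal c *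
          (ENNReal.ofReal (heatKernel N (2 * τ) (x - y)) * ‖g y‖ₑ ^ p) := by
          refine lintegral_lintegral_swap ?_
          refine AEMeasurable.const_mul (AEMeasurable.mul (Measurable.aemeasurable ?_) ?_) _
          · fun_prop
          · exact hg'.comp_snd
      _ = _ := by
          rw [← lintegral_const_mul'' _ hg']
          refine lintegral_congr fun y => ?_
          rw [lintegral_const_mul _ (by fun_prop), lintegral_mul_const _ (by fun_prop),
            lintegral_sub_right_eq_self (fun z => ENNReal.ofReal (heatKernel N (2 * τ) z)) y,
            lintegral_heatKernel N (by positivity), one_mul]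
  · have h0 : ∀ x, ∫ y, heatKernel N τ (x - y) * g y = 0 := by
      intro x
      refine integral_undef fun hint => hg ?_
      have hk : Measurable fun y => (heatKernel N τ (x - y))⁻¹ := by fun_prop
      refine (hk.aestronglyMeasurable.mul hint.aestronglyMeasurable).congr (ae_of_all _ fun y => ?_)
      simp only [Pi.mul_apply]
      rw [inv_mul_cancel_left₀ (heatKernel_pos N hτ _).ne']
    simp [h0, hp0]

/-- The `L^p`-`L^q` smoothing estimate for the heat semigroup, evaluated along a map `ρ` which
moves points by at most `√τ`. -/
theorem lintegral_enorm_integral_heatKernel_rpow_le_eLpNorm {p : ℝ≥0∞} {q : ℝ} (hp : 1 ≤ p)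
    (hp_top : p ≠ ∞) (hpq : p.toReal ≤ q) :
    ∃ c : ℝ, 0 < c ∧ ∀ τ : ℝ, 0 < τ → ∀ (g : EuclideanSpace ℝ (Fin N) → ℝ)
      (ρ : EuclideanSpace ℝ (Fin N) → EuclideanSpace ℝ (Fin N)), (∀ x, dist x (ρ x) ≤ √τ) →
      ∫⁻ x, ‖∫ y, heatKernel N τ (ρ x - y) * g y‖ₑ ^ q ≤
        (ENNReal.ofReal (c * τ ^ (-((N : ℝ) / 2 * (1 / p.toReal - 1 / q)))) *
          eLpNorm g p volume) ^ q := by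
  have hp1 : 1 ≤ p.toReal := by
    simpa using ENNReal.toReal_mono hp_top hp
  have hp_ne : p ≠ 0 := (zero_lt_one.trans_le hp).ne'
  set P := p.toReal with hP
  have hP0 : 0 < P := by linarith
  have hq0 : 0 < q := by linarith
  have hqP : 0 ≤ q / P - 1 := by
    rw [sub_nonneg, le_div_iff₀ hP0]; linarith
  set c₀ : ℝ := 2 ^ ((N : ℝ) / 2) * Real.exp (1 / 4)
  have hc₀0 : 0 < c₀ := by positivity
  set β : ℝ := (N : ℝ) / 2 * (1 / P - 1 / q) with hβ
  refine ⟨(4 * π) ^ (-β) * c₀ ^ (1 / q), by positivity, fun τ hτ g ρ hρ => ?_⟩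
  rw [eLpNorm_eq_lintegral_rpow_enorm_toReal hp_ne hp_top, ← hP]
  set I := ∫⁻ y, ‖g y‖ₑ ^ P
  set κ : ℝ := (4 * π * τ) ^ (-(N : ℝ) / 2)
  have hκ0 : 0 < κ := by positivity
  calc _ ≤ ∫⁻ x, (ENNReal.ofReal κ * I) ^ (q / P - 1) *
        ‖∫ y, heatKernel N τ (ρ x - y) * g y‖ₑ ^ P := by
        refine lintegral_mono fun x => ?_
        have := enorm_integral_heatKernel_rpow_le_lintegral hp1 hτ g (ρ x)
        calc _ = (‖∫ y, heatKernel N τ (ρ x - y) * g y‖ₑ ^ P) ^ (q / P - 1) *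
              ‖∫ y, heatKernel N τ (ρ x - y) * g y‖ₑ ^ P := by
              rw [← ENNReal.rpow_mul, ← ENNReal.rpow_add_of_nonneg _ _ (by positivity) hP0.le]
              congr 1
              field_simp
              ring
          _ ≤ _ := by gcongr
    _ ≤ (ENNReal.ofReal κ * I) ^ (q / P - 1) * (ENNReal.ofReal c₀ * I) := by
        by_cases htop : (ENNReal.ofReal κ * I) ^ (q / P - 1) = ∞
        · have hIt : I = ∞ := by
            by_contra hcon
            exact ENNReal.rpow_ne_top_of_nonneg hqP (ENNReal.mul_ne_top ENNReal.ofReal_ne_top hcon)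
              htop
          rw [htop, hIt, ENNReal.mul_top (by simpa using hc₀0), ENNReal.top_mul_top]
          exact le_top
        rw [lintegral_const_mul' _ _ htop]
        gcongr
        exact lintegral_enorm_integral_heatKernel_rpow_le hp1 hτ g hρ
    _ = ENNReal.ofReal (κ ^ (q / P - 1) * c₀) * I ^ (q / P) := by
        rw [ENNReal.mul_rpow_of_nonneg _ _ hqP, ENNReal.ofReal_mul (p := κ ^ (q / P - 1)) (by positivity),
          ENNReal.ofReal_rpow_of_pos hκ0, mul_mul_mul_comm]
        congr 1
        nth_rewrite 2 [← ENNReal.rpow_one I]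
        rw [← ENNReal.rpow_add_of_nonneg _ _ hqP zero_le_one, sub_add_cancel]
    _ = _ := by
        rw [ENNReal.mul_rpow_of_nonneg _ _ hq0.le, ← ENNReal.rpow_mul, one_div_mul_eq_div,
          ENNReal.ofReal_rpow_of_pos (by positivity)]
        congr 2
        rw [mul_right_comm, ← Real.mul_rpow (by positivity) hτ.le,
          Real.mul_rpow (by positivity) (by positivity), ← Real.rpow_mul (by positivity),
          ← Real.rpow_mul hc₀0.le, one_div_mul_cancel hq0.ne', Real.rpow_one,
          ← Real.rpow_mul (by positivity)]
        congr 2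
        rw [hβ]
        field_simp

/-- The `L^p`-`L^∞` smoothing estimate for the heat semigroup. -/
theorem enorm_integral_heatKernel_le_eLpNorm {p : ℝ≥0∞} (hp : 1 ≤ p) (hp_top : p ≠ ∞) :
    ∃ c : ℝ, 0 < c ∧ ∀ τ : ℝ, 0 < τ → ∀ (g : EuclideanSpace ℝ (Fin N) → ℝ)
      (x : EuclideanSpace ℝ (Fin N)), ‖∫ y, heatKernel N τ (x - y) * g y‖ₑ ≤
        ENNReal.ofReal (c * τ ^ (-((N : ℝ) / 2 * (1 / p.toReal)))) * eLpNorm g p volume := by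
  have hp1 : 1 ≤ p.toReal := by
    simpa using ENNReal.toReal_mono hp_top hp
  have hp_ne : p ≠ 0 := (zero_lt_one.trans_le hp).ne'
  set P := p.toReal with hP
  have hP0 : 0 < P := by linarith
  refine ⟨(4 * π) ^ (-((N : ℝ) / 2 * (1 / P))), by positivity, fun τ hτ g x => ?_⟩
  rw [eLpNorm_eq_lintegral_rpow_enorm_toReal hp_ne hp_top, ← hP,
    ← Real.mul_rpow (by positivity) hτ.le]
  have h := enorm_integral_heatKernel_rpow_le_lintegral hp1 hτ g x
  rw [← ENNReal.le_rpow_inv_iff hP0, ENNReal.mul_rpow_of_nonneg _ _ (by positivity),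
    ENNReal.ofReal_rpow_of_pos (by positivity), ← Real.rpow_mul (by positivity), ← one_div] at h
  convert h using 4
  ring

end

/-- Up to a small error, a truncated function is dominated by its value at a nearby point which
takes only countably many values and depends measurably on the argument. -/
theorem exists_measurable_cell_maximizer {E : Type*} [PseudoMetricSpace E]
    [TopologicalSpace.SeparableSpace E] [Nonempty E] [MeasurableSpace E] [OpensMeasurableSpace E]
    (h : E → ℝ) (k : ℝ) {ε η : ℝ} (hε : 0 < ε) (hη : 0 < η) :
    ∃ (κ : E → ℕ) (ξ : ℕ → E), Measurable κ ∧ (∀ x, dist x (ξ (κ x)) ≤ ε) ∧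
      ∀ x, min k (h x) - η ≤ h (ξ (κ x)) := by
  classical
  have hex : ∀ x, ∃ n, dist x (TopologicalSpace.denseSeq E n) < ε / 2 := fun x =>
    (TopologicalSpace.denseRange_denseSeq E).exists_dist_lt x (half_pos hε)
  have hcell : ∀ n, ∃ y, (∃ x, Nat.find (hex x) = n) → Nat.find (hex y) = n ∧
      ∀ x, Nat.find (hex x) = n → min k (h x) - η ≤ h y := by
    intro n
    by_cases hne : ∃ x, Nat.find (hex x) = n
    · set s : Set ℝ := (fun x => min k (h x)) '' {x | Nat.find (hex x) = n}
      have hs : BddAbove s := ⟨k, by rintro _ ⟨x, -, rfl⟩; exact min_le_left _ _⟩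
      have hs' : s.Nonempty := by
        obtain ⟨x, hx⟩ := hne
        exact ⟨_, x, hx, rfl⟩
      obtain ⟨_, ⟨y, hy, rfl⟩, hlt⟩ := exists_lt_of_lt_csSup hs' (sub_lt_self (sSup s) hη)
      refine ⟨y, fun _ => ⟨hy, fun x hx => ?_⟩⟩
      have h1 : min k (h x) ≤ sSup s := le_csSup hs ⟨x, hx, rfl⟩
      have h2 : min k (h y) ≤ h y := min_le_right _ _
      linarith
    · exact ⟨Classical.arbitrary E, fun h => absurd h hne⟩
  choose ξ hξ using hcell
  refine ⟨fun x => Nat.find (hex x), ξ, ?_, fun x => ?_, fun x => ?_⟩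
  · exact measurable_find hex fun n => measurableSet_lt (by fun_prop) (by fun_prop)
  · have h1 := Nat.find_spec (hex x)
    have h2 := Nat.find_spec (hex (ξ (Nat.find (hex x))))
    rw [(hξ _ ⟨x, rfl⟩).1] at h2
    linarith [dist_triangle_right x (ξ (Nat.find (hex x)))
      (TopologicalSpace.denseSeq E (Nat.find (hex x)))]
  · exact (hξ _ ⟨x, rfl⟩).2 x rfl

/-- A bound for the `L^q` norm of a Bochner integral depending on a parameter, without joint
measurability: the majorant `w` of the norms of the slices is replaced by a measurable `m` which
dominates every measurable minorant of `w`. -/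
theorem lintegral_enorm_setIntegral_rpow_le {E : Type*} [PseudoMetricSpace E]
    [TopologicalSpace.SeparableSpace E] [Nonempty E] [MeasurableSpace E] [OpensMeasurableSpace E]
    {ν : Measure E} [SFinite ν] {q : ℝ} (hq : 1 ≤ q) {t : ℝ}
    {G : ℝ → E → ℝ} (hG : ∀ x, IntegrableOn (fun s => G s x) (Set.Ioo 0 t))
    {K w m : ℝ → ℝ≥0∞} (hK : Measurable K) (hm : Measurable m)
    (hK0 : ∀ s ∈ Set.Ioo 0 t, K s ≠ 0) (hKt : ∀ s ∈ Set.Ioo 0 t, K s ≠ ∞)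
    (hmax : ∀ D : Set ℝ, MeasurableSet D → D ⊆ Set.Ioo 0 t → ∀ u : ℝ → ℝ≥0∞, Measurable u →
      u ≤ᵐ[volume.restrict D] w → u ≤ᵐ[volume.restrict D] m)
    (hGw : ∀ s ∈ Set.Ioo 0 t, ∀ ρ : E → E, (∀ x, dist x (ρ x) ≤ √(t - s)) →
      ∫⁻ x, ‖G s (ρ x)‖ₑ ^ q ∂ν ≤ (K s * w s) ^ q) :
    ∫⁻ x, ‖∫ s in Set.Ioo 0 t, G s x‖ₑ ^ q ∂ν ≤ (∫⁻ s in Set.Ioo 0 t, K s * m s) ^ q := by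
  have hq0 : 0 < q := by linarith
  have approx : ∀ k η δ : ℝ, 0 < η → 0 < δ → ∃ U : E → ℝ≥0∞, Measurable U ∧
      (∀ x, ENNReal.ofReal (min k ‖∫ s in Set.Ioo 0 (t - δ), G s x‖ - η) ≤ U x) ∧
      ∫⁻ x, U x ^ q ∂ν ≤ (∫⁻ s in Set.Ioo 0 t, K s * m s) ^ q := by
    intro k η δ hη hδ
    have hD : Set.Ioo 0 (t - δ) ⊆ Set.Ioo 0 t := Set.Ioo_subset_Ioo_right (by linarith)
    obtain ⟨κ, ξ, hκ, hdist, hle⟩ := exists_measurable_cell_maximizer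
      (fun x => ‖∫ s in Set.Ioo 0 (t - δ), G s x‖) k (Real.sqrt_pos.2 hδ) hη
    have hg : ∀ j, AEMeasurable (fun s => ‖G s (ξ j)‖ₑ) (volume.restrict (Set.Ioo 0 (t - δ))) :=
      fun j => ((hG (ξ j)).mono_set hD).aestronglyMeasurable.enorm
    choose g hgm hgeq using hg
    set φ : ℝ → E → ℝ≥0∞ := fun s x => g (κ x) s
    have hφ : Measurable (Function.uncurry φ) := by
      have h1 : Measurable fun z : ℝ × ℕ => g z.2 z.1 := measurable_from_prod_countable_left hgm
      exact h1.comp (measurable_fst.prodMk (hκ.comp measurable_snd))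
    have hφeq : ∀ᵐ s ∂volume.restrict (Set.Ioo 0 (t - δ)), ∀ x, φ s x = ‖G s (ξ (κ x))‖ₑ := by
      filter_upwards [ae_all_iff.2 hgeq] with s hs x
      exact (hs (κ x)).symm
    set I : ℝ → ℝ≥0∞ := fun s => (∫⁻ x, φ s x ^ q ∂ν) ^ (1 / q)
    have hI : Measurable I := (Measurable.lintegral_prod_right' (hφ.pow_const q)).pow_const _
    have hIq : ∀ s, ∫⁻ x, φ s x ^ q ∂ν = I s ^ q := fun s => by
      rw [← ENNReal.rpow_mul, one_div_mul_cancel hq0.ne', ENNReal.rpow_one]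
    have hIw : (fun s => I s / K s) ≤ᵐ[volume.restrict (Set.Ioo 0 (t - δ))] w := by
      filter_upwards [hφeq, ae_restrict_mem measurableSet_Ioo] with s hs hsD
      refine ENNReal.div_le_of_le_mul' ?_
      rw [← ENNReal.rpow_le_rpow_iff hq0, ← hIq]
      simp only [hs]
      refine hGw s (hD hsD) _ fun x => (hdist x).trans (Real.sqrt_le_sqrt ?_)
      linarith [hsD.2]
    have hIm := hmax _ measurableSet_Ioo hD _ (hI.div hK) hIw
    refine ⟨fun x => ∫⁻ s in Set.Ioo 0 (t - δ), φ s x,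
      (hφ.comp measurable_swap).lintegral_prod_right', fun x => ?_, ?_⟩
    · calc _ ≤ ENNReal.ofReal ‖∫ s in Set.Ioo 0 (t - δ), G s (ξ (κ x))‖ :=
            ENNReal.ofReal_le_ofReal (hle x)
        _ ≤ ∫⁻ s in Set.Ioo 0 (t - δ), ‖G s (ξ (κ x))‖ₑ := by
            rw [ofReal_norm]
            exact enorm_integral_le_lintegral_enorm _
        _ = _ := lintegral_congr_ae (hφeq.mono fun s hs => (hs x).symm)
    · refine (lintegral_lintegral_rpow_le hq hφ (b := fun s => K s * m s) (hK.mul hm) ?_).trans ?_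
      · filter_upwards [hIm, ae_restrict_mem measurableSet_Ioo] with s hs hsD
        rw [hIq]
        refine ENNReal.rpow_le_rpow ?_ hq0.le
        rw [Pi.div_apply, ENNReal.div_le_iff (hK0 s (hD hsD)) (hKt s (hD hsD))] at hs
        rwa [mul_comm]
      · exact ENNReal.rpow_le_rpow (lintegral_mono_set hD) hq0.le
  choose U hU hUle hUint using fun n : ℕ =>
    approx n (1 / ((n : ℝ) + 1)) (1 / ((n : ℝ) + 1)) Nat.one_div_pos_of_nat Nat.one_div_pos_of_nat
  have hlim : ∀ x, ‖∫ s in Set.Ioo 0 t, G s x‖ₑ ^ q ≤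
      Filter.liminf (fun n => U n x ^ q) Filter.atTop := by
    intro x
    have hη := tendsto_one_div_add_atTop_nhds_zero_nat (𝕜 := ℝ)
    have hunion : ⋃ n : ℕ, Set.Ioo 0 (t - 1 / ((n : ℝ) + 1)) = Set.Ioo 0 t := by
      ext s
      simp only [Set.mem_iUnion, Set.mem_Ioo]
      refine ⟨fun ⟨n, h0, h1⟩ => ⟨h0, ?_⟩, fun ⟨h0, h1⟩ => ?_⟩
      · linarith [Nat.one_div_pos_of_nat (α := ℝ) (n := n)]
      · obtain ⟨n, hn⟩ := exists_nat_one_div_lt (sub_pos.2 h1)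
        exact ⟨n, h0, by linarith⟩
    have hmono : Monotone fun n : ℕ => Set.Ioo 0 (t - 1 / ((n : ℝ) + 1)) := fun a b hab =>
      Set.Ioo_subset_Ioo_right (sub_le_sub_left (Nat.one_div_le_one_div hab) _)
    have h1 := tendsto_setIntegral_of_monotone (μ := volume) (f := fun s => G s x)
      (fun n : ℕ => measurableSet_Ioo) hmono (by rw [hunion]; exact hG x)
    rw [hunion] at h1
    set L := ‖∫ s in Set.Ioo 0 t, G s x‖ with hL
    have h2 : Filter.Tendsto (fun n : ℕ => min (n : ℝ)
        ‖∫ s in Set.Ioo 0 (t - 1 / ((n : ℝ) + 1)), G s x‖ - 1 / ((n : ℝ) + 1)) Filter.atTop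
        (nhds L) := by
      have h3 : Filter.Tendsto (fun n : ℕ => ‖∫ s in Set.Ioo 0 (t - 1 / ((n : ℝ) + 1)), G s x‖
          - 1 / ((n : ℝ) + 1)) Filter.atTop (nhds L) := by
        rw [← sub_zero L]
        exact h1.norm.sub hη
      refine h3.congr' ?_
      filter_upwards [h1.norm.eventually_le_const (lt_add_one L),
        tendsto_natCast_atTop_atTop.eventually_ge_atTop (L + 1)] with n hn hn'
      rw [min_eq_right (hn.trans hn')]
    have h4 := (ENNReal.continuous_rpow_const (y := q)).tendsto _ |>.comp
      (ENNReal.tendsto_ofReal h2)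
    rw [← ofReal_norm, ← hL, ← h4.liminf_eq]
    refine Filter.liminf_le_liminf (Filter.Eventually.of_forall fun n => ?_)
    exact ENNReal.rpow_le_rpow (hUle n x) hq0.le
  calc _ ≤ ∫⁻ x, Filter.liminf (fun n => U n x ^ q) Filter.atTop ∂ν := lintegral_mono hlim
    _ ≤ Filter.liminf (fun n => ∫⁻ x, U n x ^ q ∂ν) Filter.atTop :=
        lintegral_liminf_le fun n => (hU n).pow_const q
    _ ≤ Filter.liminf (fun _ : ℕ => (∫⁻ s in Set.Ioo 0 t, K s * m s) ^ q) Filter.atTop :=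
        Filter.liminf_le_liminf (Filter.Eventually.of_forall hUint)
    _ = _ := Filter.liminf_const _

theorem enorm_setIntegral_le {t : ℝ} {g : ℝ → ℝ} {K w m : ℝ → ℝ≥0∞} (hK : Measurable K)
    (hK0 : ∀ s ∈ Set.Ioo 0 t, K s ≠ 0) (hKt : ∀ s ∈ Set.Ioo 0 t, K s ≠ ∞)
    (hmax : ∀ D : Set ℝ, MeasurableSet D → D ⊆ Set.Ioo 0 t → ∀ u : ℝ → ℝ≥0∞, Measurable u →
      u ≤ᵐ[volume.restrict D] w → u ≤ᵐ[volume.restrict D] m)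
    (hgw : ∀ s ∈ Set.Ioo 0 t, ‖g s‖ₑ ≤ K s * w s) :
    ‖∫ s in Set.Ioo 0 t, g s‖ₑ ≤ ∫⁻ s in Set.Ioo 0 t, K s * m s := by
  by_cases hg : IntegrableOn g (Set.Ioo 0 t)
  · obtain ⟨g', hg'm, hg'⟩ := hg.aestronglyMeasurable.enorm
    have hmem := ae_restrict_mem (μ := volume) (measurableSet_Ioo (a := (0 : ℝ)) (b := t))
    have h := hmax _ measurableSet_Ioo subset_rfl _ (hg'm.div hK) (by
      filter_upwards [hg', hmem] with s hs hst
      rw [Pi.div_apply]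
      exact ENNReal.div_le_of_le_mul' (hs ▸ hgw s hst))
    refine (enorm_integral_le_lintegral_enorm _).trans (lintegral_mono_ae ?_)
    filter_upwards [hg', hmem, h] with s hs hst h
    rwa [Pi.div_apply, ENNReal.div_le_iff (hK0 s hst) (hKt s hst), ← hs, mul_comm] at h
  · rw [integral_undef hg, enorm_zero]
    exact zero_le

/-- The pointwise-in-time estimate for the Duhamel operator. No measurability of `f` is needed: the
spatial norms of `f` may be replaced by a measurable function `m` which dominates every measurable
minorant of them. -/
theorem eLpNorm_heatOpC_le (N : ℕ) {p q : ℝ≥0∞} (hp : 1 ≤ p) (hp_top : p ≠ ∞) (hpq : p ≤ q) :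
    ∃ c : ℝ, 0 < c ∧ ∀ (f : ℝ → EuclideanSpace ℝ (Fin N) → ℝ) (t : ℝ) (m : ℝ → ℝ≥0∞),
      Measurable m →
      (∀ D : Set ℝ, MeasurableSet D → D ⊆ Set.Ioo 0 t → ∀ u : ℝ → ℝ≥0∞, Measurable u →
        u ≤ᵐ[volume.restrict D] (fun s => eLpNorm (f s) p volume) → u ≤ᵐ[volume.restrict D] m) →
      eLpNorm (heatOpC f t) q volume ≤ ∫⁻ s in Set.Ioo 0 t,
        ENNReal.ofReal (c * (t - s) ^ (-((N : ℝ) / 2 * (1 / p.toReal - 1 / q.toReal)))) * m s := by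
  have hpos : ∀ {c t β : ℝ}, 0 < c → ∀ s ∈ Set.Ioo 0 t, ENNReal.ofReal (c * (t - s) ^ β) ≠ 0 := by
    intro c t β hc s hs
    have := Real.rpow_pos_of_pos (sub_pos.2 hs.2) β
    simpa using mul_pos hc this
  rcases eq_or_ne q ∞ with rfl | hq_top
  · obtain ⟨c, hc, h⟩ := enorm_integral_heatKernel_le_eLpNorm (N := N) hp hp_top
    refine ⟨c, hc, fun f t m _ hmax => ?_⟩
    rw [eLpNorm_exponent_top]
    refine eLpNormEssSup_le_of_ae_enorm_bound (ae_of_all _ fun x => ?_)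
    refine enorm_setIntegral_le (by fun_prop) (hpos hc) (fun _ _ => ENNReal.ofReal_ne_top) hmax
      fun s hs => ?_
    simpa using h (t - s) (sub_pos.2 hs.2) (f s) x
  · have hpq' : p.toReal ≤ q.toReal := ENNReal.toReal_mono hq_top hpq
    have hq1 : 1 ≤ q.toReal := by
      simpa using ENNReal.toReal_mono hq_top (hp.trans hpq)
    have hq0 : 0 < q.toReal := by linarith
    obtain ⟨c, hc, h⟩ := lintegral_enorm_integral_heatKernel_rpow_le_eLpNorm (N := N) hp hp_top hpq'
    refine ⟨c, hc, fun f t m hm hmax => ?_⟩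
    set G : ℝ → EuclideanSpace ℝ (Fin N) → ℝ := fun s x => ∫ y, heatKernel N (t - s) (x - y) * f s y
    set A : Set (EuclideanSpace ℝ (Fin N)) := {x | IntegrableOn (fun s => G s x) (Set.Ioo 0 t)}
    have hfG : ∀ x, heatOpC f t x = ∫ s in Set.Ioo 0 t, A.indicator (G s) x := by
      intro x
      by_cases hx : x ∈ A
      · simp only [Set.indicator_of_mem hx]
        rfl
      · simp only [Set.indicator_of_notMem hx, integral_zero]
        exact integral_undef hx
    have hG : ∀ x, IntegrableOn (fun s => A.indicator (G s) x) (Set.Ioo 0 t) := by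
      intro x
      by_cases hx : x ∈ A
      · simp only [Set.indicator_of_mem hx]
        exact hx
      · simpa only [Set.indicator_of_notMem hx] using integrableOn_zero
    rw [eLpNorm_eq_lintegral_rpow_enorm_toReal (zero_lt_one.trans_le (hp.trans hpq)).ne' hq_top]
    simp only [hfG]
    rw [← ENNReal.rpow_le_rpow_iff hq0, ← ENNReal.rpow_mul, one_div_mul_cancel hq0.ne',
      ENNReal.rpow_one]
    refine lintegral_enorm_setIntegral_rpow_le hq1 hG (by fun_prop) hm (hpos hc)
      (fun _ _ => ENNReal.ofReal_ne_top) hmax fun s hs ρ hρ => ?_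
    refine le_trans (lintegral_mono fun x => ?_) (h (t - s) (sub_pos.2 hs.2) (f s) ρ hρ)
    exact ENNReal.rpow_le_rpow (enorm_indicator_le_enorm_self _ _) hq0.le

/-- Lemma 3: if `(N/2)(1/q₁ - 1/q₂) < 1` and `1/r₁ + (N/2)(1/q₁ - 1/q₂) = 1 + 1/r₂`, then
`C` is bounded from `L^{r₁}(0,T;L^{q₁})` to `L^{r₂}(0,T;L^{q₂})`. -/
theorem heatOpC_bounded (N : ℕ) (hN : 0 < N) (T : ℝ≥0∞) (hT : 0 < T)
    (r₁ r₂ : ℝ) (q₁ q₂ : ℝ≥0∞)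
    (hr₁ : 1 < r₁) (hr₂ : 1 < r₂) (hq₁ : 1 ≤ q₁) (hq₁₂ : q₁ ≤ q₂)
    (hcond : (N : ℝ) / 2 * (1 / q₁.toReal - 1 / q₂.toReal) < 1)
    (hscal : 1 / r₁ + (N : ℝ) / 2 * (1 / q₁.toReal - 1 / q₂.toReal) = 1 + 1 / r₂) :
    ∃ C > 0, ∀ f : ℝ → EuclideanSpace ℝ (Fin N) → ℝ,
      mixedNorm r₂ q₂ T (heatOpC f) ≤ ENNReal.ofReal C * mixedNorm r₁ q₁ T f := by
  have hr₁0 : 0 < r₁ := by linarith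
  have hr₂0 : 0 < r₂ := by linarith
  have hq₁_top : q₁ ≠ ∞ := by
    rintro rfl
    rw [top_le_iff.1 hq₁₂, sub_self, mul_zero, add_zero] at hscal
    have h1 : 1 / r₁ < 1 := (div_lt_one hr₁0).2 hr₁
    have h2 : 0 < 1 / r₂ := by positivity
    linarith
  have hr₁₂ : r₁ < r₂ := by
    refine (one_div_lt_one_div hr₂0 hr₁0).1 ?_
    linarith
  obtain ⟨c, hc, hest⟩ := eLpNorm_heatOpC_le N hq₁ hq₁_top hq₁₂
  set α : ℝ := (N : ℝ) / 2 * (1 / q₁.toReal - 1 / q₂.toReal)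
  obtain ⟨C, hC, hHLS⟩ := lintegral_fracKernel_conv_rpow_le (α := α) hr₁ hr₁₂ (by linarith)
  refine ⟨c * C, by positivity, fun f => ?_⟩
  set S : Set ℝ := {t : ℝ | 0 < t ∧ ENNReal.ofReal t < T}
  have hS : MeasurableSet S :=
    measurableSet_Ioi.inter (measurableSet_lt ENNReal.measurable_ofReal measurable_const)
  unfold mixedNorm
  by_cases hfin : ∫⁻ t in S, eLpNorm (f t) q₁ volume ^ r₁ = ∞
  · rw [hfin, ENNReal.top_rpow_of_pos (by positivity), ENNReal.mul_top]
    · exact le_top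
    · simpa using mul_pos hc hC
  obtain ⟨m, hm, hmint, hmax⟩ := exists_measurable_maximal_minorant hr₁0 hfin
  have hpt : ∀ t ∈ S, eLpNorm (heatOpC f t) q₂ volume ≤
      ENNReal.ofReal c * ∫⁻ s, fracKernel α (t - s) * S.indicator m s := by
    intro t ht
    have hsub : Set.Ioo 0 t ⊆ S := fun s hs =>
      ⟨hs.1, (ENNReal.ofReal_le_ofReal hs.2.le).trans_lt ht.2⟩
    refine (hest f t m hm fun D hD hDt u hu hle => ?_).trans ?_
    · have hDS := hDt.trans hsub
      have h := hmax (D.indicator u) (hu.indicator hD).aemeasurable ?_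
      · filter_upwards [ae_restrict_of_ae_restrict_of_subset hDS h, ae_restrict_mem hD] with s hs hsD
        rwa [Set.indicator_of_mem hsD] at hs
      · refine ae_restrict_of_ae ?_
        filter_upwards [(ae_restrict_iff' hD).1 hle] with s hs
        by_cases hsD : s ∈ D
        · rw [Set.indicator_of_mem hsD]
          exact hs hsD
        · rw [Set.indicator_of_notMem hsD]
          exact zero_le
    · rw [← lintegral_const_mul' _ _ ENNReal.ofReal_ne_top]
      refine (setLIntegral_mono' measurableSet_Ioo fun s hs => ?_).trans
        (setLIntegral_le_lintegral (Set.Ioo 0 t) _)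
      rw [fracKernel, Set.indicator_of_mem (Set.mem_Ioi.2 (sub_pos.2 hs.2)),
        Set.indicator_of_mem (hsub hs), ← mul_assoc, ← ENNReal.ofReal_mul hc.le]
  calc _ ≤ (∫⁻ t in S, (ENNReal.ofReal c * ∫⁻ s, fracKernel α (t - s) * S.indicator m s) ^ r₂) ^
        (1 / r₂) :=
        ENNReal.rpow_le_rpow (setLIntegral_mono' hS fun t ht =>
          ENNReal.rpow_le_rpow (hpt t ht) hr₂0.le) (by positivity)
    _ ≤ (∫⁻ t, (ENNReal.ofReal c * ∫⁻ s, fracKernel α (t - s) * S.indicator m s) ^ r₂) ^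
        (1 / r₂) :=
        ENNReal.rpow_le_rpow (setLIntegral_le_lintegral _ _) (by positivity)
    _ = ENNReal.ofReal c *
        (∫⁻ t, (∫⁻ s, fracKernel α (t - s) * S.indicator m s) ^ r₂) ^ (1 / r₂) := by
        simp_rw [ENNReal.mul_rpow_of_nonneg _ _ hr₂0.le]
        rw [lintegral_const_mul' _ _ (ENNReal.rpow_ne_top_of_nonneg hr₂0.le ENNReal.ofReal_ne_top),
          ENNReal.mul_rpow_of_nonneg _ _ (by positivity), ← ENNReal.rpow_mul,
          mul_one_div_cancel hr₂0.ne', ENNReal.rpow_one]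
    _ ≤ ENNReal.ofReal c * (ENNReal.ofReal C * (∫⁻ s, S.indicator m s ^ r₁) ^ (1 / r₁)) :=
        mul_le_mul' le_rfl (hHLS _ (hm.indicator hS))
    _ = _ := by
        rw [← mul_assoc, ← ENNReal.ofReal_mul hc.le, ← hmint, ← lintegral_indicator hS]
        congr 3 with s
        by_cases hs : s ∈ S
        · simp [hs]
        · simp [hs, hr₁0]
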